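/- arXiv:2311.17115 — 3 statements merged into one kernel-verified Lean document; each statement's English description precedes it below -/
import Mathlib

section
/- For every constant Φ ∈ (0, 1/10] there exist a positive integer c, a constant ε > 0, and a threshold n₀ such that for all integers n ≥ n₀ and all integers s with 1 ≤ s ≤ n/2, the following inequality holds: C(n, s) · C(c·s, ⌈(1−Φ)·c·s⌉) · ((1+ε)·s/n)^{(1−Φ)·c·s} ≤ 1/n², where C(·,·) denotes the binomial coefficient, ⌈·⌉ denotes the ceiling (so that the second binomial coefficient has an integer lower argument), and the last factor is a real power with real exponent (1−Φ)·c·s. -/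
/-!
Write `H` for the binary entropy in nats and `x = s / n ≤ 1 / 2`. Since `C(n, s) ≤ (e / x) ^ s` and
`C(c * s, (1 - Φ) * c * s) ≤ exp (c * s * H(Φ))`, the product is at most the `s`-th power of
`e * x⁻¹ * (exp (H(Φ)) * ((1 + ε) * x) ^ (1 - Φ)) ^ c`. The base of the inner `c`-th power is
largest at `x = 1 / 2`, where it is below `1` for small `ε` exactly when `H(Φ) < (1 - Φ) * log 2`.
A large `c` then beats the factor `e * x⁻¹` with any prescribed power of `x` to spare, and
`x ^ (2 * s) ≤ 1 / n`.
-/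

section

open Real

lemma choose_mul_pow_mul_pow_le_add_pow {R : Type*} [CommSemiring R] [PartialOrder R]
    [IsOrderedRing R] {x y : R} (hx : 0 ≤ x) (hy : 0 ≤ y) {m k : ℕ} (hk : k ≤ m) :
    (m.choose k : R) * x ^ k * y ^ (m - k) ≤ (x + y) ^ m := by
  rw [add_pow]
  calc (m.choose k : R) * x ^ k * y ^ (m - k) = x ^ k * y ^ (m - k) * m.choose k := by ring
    _ ≤ ∑ i ∈ Finset.range (m + 1), x ^ i * y ^ (m - i) * m.choose i :=
      Finset.single_le_sum (f := fun i ↦ x ^ i * y ^ (m - i) * (m.choose i : R))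
        (fun i _ ↦ by positivity) (Finset.mem_range_succ_iff.2 hk)

lemma choose_le_exp_one_mul_div_pow (n k : ℕ) : (n.choose k : ℝ) ≤ (exp 1 * n / k) ^ k := by
  rcases k.eq_zero_or_pos with rfl | hk
  · simp
  calc (n.choose k : ℝ) ≤ (n : ℝ) ^ k / k.factorial := Nat.choose_le_pow_div k n
    _ = (k : ℝ) ^ k / k.factorial * ((n : ℝ) / k) ^ k := by
      rw [div_pow]
      field_simp
    _ ≤ exp k * ((n : ℝ) / k) ^ k := by
      gcongr
      exact pow_div_factorial_le_exp _ k.cast_nonneg k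
    _ = (exp 1 * n / k) ^ k := by rw [← exp_one_pow, ← mul_pow, mul_div_assoc]

lemma choose_le_exp_mul_binEntropy {p : ℝ} (hp₀ : 0 < p) (hp : p ≤ 1 / 2) {m k : ℕ}
    (hk : (1 - p) * m ≤ k) : (m.choose k : ℝ) ≤ exp (m * binEntropy p) := by
  rcases lt_or_ge m k with hmk | hkm
  · rw [Nat.choose_eq_zero_of_lt hmk, Nat.cast_zero]
    positivity
  have hq₀ : 0 < 1 - p := by linarith
  have weight_le : exp (-(m * binEntropy p)) ≤ (1 - p) ^ k * p ^ (m - k) := by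
    have log_le : log p ≤ log (1 - p) := log_le_log hp₀ (by linarith)
    rw [← exp_log (by positivity : 0 < (1 - p) ^ k * p ^ (m - k)), exp_le_exp,
      log_mul (by positivity) (by positivity), log_pow, log_pow, Nat.cast_sub hkm, binEntropy,
      log_inv, log_inv]
    linarith [mul_le_mul_of_nonneg_right hk (sub_nonneg.2 log_le)]
  have weighted_choose_le_one : (m.choose k : ℝ) * ((1 - p) ^ k * p ^ (m - k)) ≤ 1 := by
    simpa [mul_assoc] using choose_mul_pow_mul_pow_le_add_pow hq₀.le hp₀.le hkm
  rw [← inv_inv (exp _), ← exp_neg, ← one_div, le_div_iff₀ (exp_pos _)]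
  exact (mul_le_mul_of_nonneg_left weight_le (Nat.cast_nonneg _)).trans weighted_choose_le_one

lemma choose_mul_choose_mul_rpow_le_exp {p ε : ℝ} (hp₀ : 0 < p) (hp : p ≤ 1 / 2) (hε : -1 < ε)
    (c : ℕ) {n s : ℕ} (hn : 0 < n) (hs : 0 < s) :
    (n.choose s : ℝ) * ((c * s).choose ⌈(1 - p) * (c * s : ℕ)⌉₊ : ℝ) *
        ((1 + ε) * (s : ℝ) / (n : ℝ)) ^ ((1 - p) * ((c * s : ℕ) : ℝ)) ≤
      exp (s * (1 - log (s / n) + c * binEntropy p +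
        (1 - p) * c * (log (1 + ε) + log (s / n)))) := by
  have hx : (0 : ℝ) < s / n := by positivity
  have one_add_pos : 0 < 1 + ε := by linarith
  have choose_vertices : (n.choose s : ℝ) ≤ exp (s * (1 - log (s / n))) := by
    convert choose_le_exp_one_mul_div_pow n s using 1
    rw [exp_nat_mul, exp_sub, exp_log hx]
    field_simp
  have choose_edges : ((c * s).choose ⌈(1 - p) * (c * s : ℕ)⌉₊ : ℝ) ≤
      exp (s * (c * binEntropy p)) := by
    convert choose_le_exp_mul_binEntropy hp₀ hp (Nat.le_ceil ((1 - p) * (c * s : ℕ))) using 2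
    push_cast
    ring
  have rpow_eq : ((1 + ε) * (s : ℝ) / (n : ℝ)) ^ ((1 - p) * ((c * s : ℕ) : ℝ)) =
      exp (s * ((1 - p) * c * (log (1 + ε) + log (s / n)))) := by
    rw [mul_div_assoc, rpow_def_of_pos (by positivity), log_mul one_add_pos.ne' hx.ne']
    push_cast
    ring_nf
  rw [rpow_eq, mul_add (s : ℝ) (_ + _), mul_add (s : ℝ) (1 - _), exp_add, exp_add]
  gcongr

lemma lt_half_of_binEntropy_lt {p : ℝ} (hp₀ : 0 < p) (hp₁ : p < 1)
    (hp : binEntropy p < (1 - p) * log 2) : p < 1 / 2 := by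
  by_contra! hp_half
  have neg_log_nonneg : 0 ≤ log p⁻¹ := log_nonneg ((one_le_inv₀ hp₀).2 hp₁.le)
  have log_two_le : log 2 ≤ log (1 - p)⁻¹ :=
    log_le_log two_pos ((le_inv_comm₀ two_pos (by linarith)).2 (by linarith))
  rw [binEntropy] at hp
  linarith [mul_nonneg hp₀.le neg_log_nonneg,
    mul_le_mul_of_nonneg_left log_two_le (sub_nonneg.2 hp₁.le)]

-- The left side is the exponent in `choose_mul_choose_mul_rpow_le_exp` divided by `s`, at
-- `x = s / n`. Once the coefficient of `log x` exceeds `2 * d`, the worst case is `x = 1 / 2`.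
lemma exists_exponent_le_mul_log {p : ℝ} (hp₁ : p < 1) (hp : binEntropy p < (1 - p) * log 2)
    (d : ℕ) :
    ∃ c : ℕ, 0 < c ∧ ∃ ε : ℝ, 0 < ε ∧ ∀ x : ℝ, 0 < x → x ≤ 1 / 2 →
      1 - log x + c * binEntropy p + (1 - p) * c * (log (1 + ε) + log x) ≤ 2 * d * log x := by
  have hq₀ : 0 < 1 - p := sub_pos.2 hp₁
  obtain ⟨ε, hε, gap_pos⟩ :
      ∃ ε : ℝ, 0 < ε ∧ 0 < (1 - p) * (log 2 - log (1 + ε)) - binEntropy p := by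
    obtain ⟨ε, hε, ε_lt⟩ : ∃ ε, 0 < ε ∧ ε < log 2 - binEntropy p / (1 - p) :=
      exists_between (sub_pos.2 ((div_lt_iff₀' hq₀).2 hp))
    have log_le : log (1 + ε) ≤ ε := by linarith [log_le_sub_one_of_pos (by linarith : 0 < 1 + ε)]
    exact ⟨ε, hε, sub_pos.2 ((div_lt_iff₀' hq₀).1 (by linarith))⟩
  set δ := (1 - p) * (log 2 - log (1 + ε)) - binEntropy p with hδ
  obtain ⟨c, hc⟩ := exists_nat_ge (max ((1 + (2 * d + 1) * log 2) / δ) ((2 * d + 1) / (1 - p)))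
  have gap_large : 1 + (2 * d + 1) * log 2 ≤ c * δ :=
    (div_le_iff₀ gap_pos).1 ((le_max_left _ _).trans hc)
  have power_large : 2 * d + 1 ≤ c * (1 - p) := (div_le_iff₀ hq₀).1 ((le_max_right _ _).trans hc)
  have c_pos : 0 < c := by
    have : (0 : ℝ) < c * (1 - p) := lt_of_lt_of_le (by positivity) power_large
    exact_mod_cast pos_of_mul_pos_left this hq₀.le
  refine ⟨c, c_pos, ε, hε, fun x hx hx_half ↦ ?_⟩
  have log_le : log x ≤ -log 2 := by
    rw [← log_inv, ← one_div]
    exact log_le_log hx hx_half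
  rw [hδ] at gap_large
  linarith [mul_le_mul_of_nonneg_left log_le (sub_nonneg.2 power_large)]

lemma natCast_div_le_half {n s : ℕ} (hsn : 2 * s ≤ n) : (s : ℝ) / n ≤ 1 / 2 := by
  have two_mul_le : 2 * (s : ℝ) ≤ n := by exact_mod_cast hsn
  exact div_le_of_le_mul₀ n.cast_nonneg (by norm_num) (by linarith)

lemma div_pow_two_mul_le_one_div {n s : ℕ} (hs : 1 ≤ s) (hsn : 2 * s ≤ n) :
    ((s : ℝ) / n) ^ (2 * s) ≤ 1 / n := by
  have hn : 0 < n := by omega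
  have hx_half : (s : ℝ) / n ≤ 1 / 2 := natCast_div_le_half hsn
  have pow_le_self : ((s : ℝ) / n) ^ s ≤ s / n :=
    pow_le_of_le_one (by positivity) (by linarith) (by omega)
  have pow_le_inv : ((s : ℝ) / n) ^ s ≤ 1 / s :=
    calc ((s : ℝ) / n) ^ s ≤ (1 / 2) ^ s := by gcongr
      _ = 1 / 2 ^ s := one_div_pow 2 s
      _ ≤ 1 / s := by
        gcongr
        exact_mod_cast s.lt_two_pow_self.le
  calc ((s : ℝ) / n) ^ (2 * s) = ((s : ℝ) / n) ^ s * ((s : ℝ) / n) ^ s := by rw [two_mul, pow_add]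
    _ ≤ s / n * (1 / s) := by gcongr
    _ = 1 / n := by field_simp

lemma binEntropy_lt_one_sub_mul_log_two {p : ℝ} (hp₀ : 0 ≤ p) (hp : p ≤ 1 / 5) :
    binEntropy p < (1 - p) * log 2 := by
  have five_mul_log_five_lt : 5 * log 5 < 12 * log 2 := by
    have h : log ((5 : ℝ) ^ 5) < log ((2 : ℝ) ^ 12) := log_lt_log (by norm_num) (by norm_num)
    simpa only [log_pow, Nat.cast_ofNat] using h
  calc binEntropy p ≤ binEntropy (1 / 5) :=
        binEntropy_strictMonoOn.monotoneOn ⟨hp₀, by linarith⟩ (by norm_num) hp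
    _ = log 5 - 4 / 5 * log 4 := by
        rw [binEntropy, show (1 - 1 / 5 : ℝ)⁻¹ = 5 / 4 by norm_num,
          log_div (by norm_num) (by norm_num), one_div, inv_inv]
        ring
    _ = log 5 - 8 / 5 * log 2 := by
        rw [show (4 : ℝ) = 2 ^ 2 by norm_num, log_pow]
        push_cast
        ring
    _ < 4 / 5 * log 2 := by linarith
    _ ≤ (1 - p) * log 2 := by
        gcongr
        linarith

theorem proba_inequality_general {p : ℝ} (hp₀ : 0 < p) (hp₁ : p < 1)
    (hp : binEntropy p < (1 - p) * log 2) (d : ℕ) :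
    ∃ c : ℕ, 0 < c ∧ ∃ ε : ℝ, 0 < ε ∧ ∀ n s : ℕ, 1 ≤ s → 2 * s ≤ n →
      (n.choose s : ℝ) * ((c * s).choose ⌈(1 - p) * (c * s : ℕ)⌉₊ : ℝ) *
          ((1 + ε) * (s : ℝ) / (n : ℝ)) ^ ((1 - p) * ((c * s : ℕ) : ℝ))
        ≤ 1 / (n : ℝ) ^ d := by
  obtain ⟨c, hc, ε, hε, exponent_le⟩ := exists_exponent_le_mul_log hp₁ hp d
  refine ⟨c, hc, ε, hε, fun n s hs hsn ↦ ?_⟩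
  have hn : 0 < n := by omega
  have hx : (0 : ℝ) < s / n := by positivity
  calc _ ≤ exp (s * (1 - log (s / n) + c * binEntropy p +
          (1 - p) * c * (log (1 + ε) + log (s / n)))) :=
        choose_mul_choose_mul_rpow_le_exp hp₀ (lt_half_of_binEntropy_lt hp₀ hp₁ hp).le
          (by linarith) c hn hs
    _ ≤ exp (s * (2 * d * log (s / n))) := by
        gcongr
        exact exponent_le _ hx (natCast_div_le_half hsn)
    _ = (((s : ℝ) / n) ^ (2 * s)) ^ d := by
        rw [← exp_log (by positivity : 0 < (((s : ℝ) / n) ^ (2 * s)) ^ d), log_pow, log_pow]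
        push_cast
        ring_nf
    _ ≤ (1 / (n : ℝ)) ^ d := by
        gcongr
        exact div_pow_two_mul_le_one_div hs hsn
    _ = 1 / (n : ℝ) ^ d := one_div_pow _ d

end

/-- The counting inequality (Lemma "probaInequality"): for every constant `Φ ∈ (0, 1/10]`
there exist a positive integer `c`, a constant `ε > 0` and a threshold `n₀` such that for all
`n ≥ n₀` and all `1 ≤ s ≤ n / 2`,
`C(n,s) * C(c*s, ⌈(1-Φ)*c*s⌉) * ((1+ε)*s/n)^((1-Φ)*c*s) ≤ 1/n²`,
where the last power is a real power with real exponent. -/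
theorem proba_inequality :
    ∀ Φ : ℝ, 0 < Φ → Φ ≤ 1 / 10 →
      ∃ c : ℕ, 0 < c ∧ ∃ ε : ℝ, 0 < ε ∧ ∃ n₀ : ℕ,
        ∀ n : ℕ, n₀ ≤ n → ∀ s : ℕ, 1 ≤ s → 2 * s ≤ n →
          (n.choose s : ℝ) * ((c * s).choose ⌈(1 - Φ) * (c * s : ℕ)⌉₊ : ℝ) *
              ((1 + ε) * (s : ℝ) / (n : ℝ)) ^ ((1 - Φ) * ((c * s : ℕ) : ℝ))
            ≤ 1 / (n : ℝ) ^ 2 := by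
  intro Φ hΦ₀ hΦ
  obtain ⟨c, hc, ε, hε, h⟩ := proba_inequality_general hΦ₀ (by linarith)
    (binEntropy_lt_one_sub_mul_log_two hΦ₀.le (by linarith)) 2
  exact ⟨c, hc, ε, hε, 0, fun n _ ↦ h n⟩
end

section
/- For every q ∈ (0,1), the binary entropy satisfies H(q) ≤ 2·√(q·(1−q)), where H(q) = −q·log₂(q) − (1−q)·log₂(1−q) and log₂ denotes the logarithm to base 2. In particular, for every Φ ∈ (0,1), H(1−Φ) ≤ 2·√(Φ·(1−Φ)). -/
/-!
On `(0, 1/2]` the quotient `H(p) / √(p(1-p))` is nondecreasing, so it is at most its value at `1/2`,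
and the symmetry `p ↔ 1 - p` covers the other half of the interval. Up to a positive factor, the
derivative of the quotient is `negMulLog p - negMulLog (1 - p)`. It is nonnegative because
`negMulLog (1 - p) - negMulLog p` vanishes at `0` and at `1/2` and has derivative
`log (p(1-p)) + 2`, which increases on that interval, making the difference convex there.
-/

open Real Set

section Entropy

variable {p : ℝ}

lemma hasDerivAt_mul_one_sub (p : ℝ) : HasDerivAt (fun x : ℝ ↦ x * (1 - x)) (1 - 2 * p) p :=
  ((hasDerivAt_id' p).mul ((hasDerivAt_id' p).const_sub 1)).congr_deriv (by ring)

lemma monotoneOn_mul_one_sub : MonotoneOn (fun x : ℝ ↦ x * (1 - x)) (Iic 2⁻¹) := by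
  intro x hx y hy hxy
  rw [mem_Iic] at hx hy
  dsimp only
  nlinarith

lemma hasDerivAt_negMulLog_one_sub_sub_negMulLog (hp₀ : p ≠ 0) (hp₁ : p ≠ 1) :
    HasDerivAt (fun x ↦ negMulLog (1 - x) - negMulLog x) (log (p * (1 - p)) + 2) p := by
  have hq : 1 - p ≠ 0 := sub_ne_zero.2 hp₁.symm
  have h_one_sub : HasDerivAt (fun x ↦ negMulLog (1 - x)) (log (1 - p) + 1) p :=
    ((hasDerivAt_negMulLog hq).comp_const_sub 1 p).congr_deriv (by ring)
  refine (h_one_sub.sub (hasDerivAt_negMulLog hp₀)).congr_deriv ?_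
  rw [log_mul hp₀ hq]
  ring

lemma convexOn_negMulLog_one_sub_sub_negMulLog :
    ConvexOn ℝ (Icc 0 2⁻¹) (fun x ↦ negMulLog (1 - x) - negMulLog x) := by
  have hderiv {x : ℝ} (hx : x ∈ Ioo (0 : ℝ) 2⁻¹) :=
    hasDerivAt_negMulLog_one_sub_sub_negMulLog hx.1.ne' (hx.2.trans two_inv_lt_one).ne
  refine MonotoneOn.convexOn_of_deriv (convex_Icc _ _) (by fun_prop) ?_ ?_ <;> rw [interior_Icc]
  · exact fun x hx ↦ (hderiv hx).differentiableAt.differentiableWithinAt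
  · intro x hx y hy hxy
    have hpos : 0 < x * (1 - x) := mul_pos hx.1 (sub_pos.2 (hx.2.trans two_inv_lt_one))
    rw [(hderiv hx).deriv, (hderiv hy).deriv]
    gcongr log ?_ + 2
    exact monotoneOn_mul_one_sub hx.2.le hy.2.le hxy

lemma negMulLog_one_sub_le_negMulLog (hp₀ : 0 ≤ p) (hp : p ≤ 2⁻¹) :
    negMulLog (1 - p) ≤ negMulLog p := by
  have hmax := convexOn_negMulLog_one_sub_sub_negMulLog.le_max_of_mem_Icc
    (left_mem_Icc.2 (hp₀.trans hp)) (right_mem_Icc.2 (hp₀.trans hp)) ⟨hp₀, hp⟩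
  have hhalf : (1 - 2⁻¹ : ℝ) = 2⁻¹ := by norm_num
  simpa only [hhalf, sub_zero, negMulLog_zero, negMulLog_one, sub_self, max_self, sub_nonpos]
    using hmax

lemma hasDerivAt_binEntropy_div_sqrt (hp₀ : 0 < p) (hp₁ : p < 1) :
    HasDerivAt (fun x ↦ binEntropy x / √(x * (1 - x)))
      ((negMulLog p - negMulLog (1 - p)) / (2 * √(p * (1 - p)) ^ 3)) p := by
  have hpos : 0 < p * (1 - p) := mul_pos hp₀ (sub_pos.2 hp₁)
  have hsqrt : √(p * (1 - p)) ≠ 0 := (sqrt_pos.2 hpos).ne'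
  refine ((hasDerivAt_binEntropy hp₀.ne' hp₁.ne).div
    ((hasDerivAt_mul_one_sub p).sqrt hpos.ne') hsqrt).congr_deriv ?_
  have hsq : √(p * (1 - p)) ^ 2 = p * (1 - p) := sq_sqrt hpos.le
  field_simp
  rw [hsq, binEntropy_eq_negMulLog_add_negMulLog_one_sub, negMulLog, negMulLog]
  ring

lemma monotoneOn_binEntropy_div_sqrt :
    MonotoneOn (fun x ↦ binEntropy x / √(x * (1 - x))) (Ioc 0 2⁻¹) := by
  have hderiv {x : ℝ} (hx : x ∈ Ioc (0 : ℝ) 2⁻¹) :=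
    hasDerivAt_binEntropy_div_sqrt hx.1 (hx.2.trans_lt two_inv_lt_one)
  refine monotoneOn_of_hasDerivWithinAt_nonneg (convex_Ioc _ _)
    (fun x hx ↦ (hderiv hx).continuousAt.continuousWithinAt)
    (fun x hx ↦ (hderiv (interior_subset hx)).hasDerivWithinAt) fun x hx ↦ ?_
  obtain ⟨hx₀, hx₁⟩ := interior_subset hx
  exact div_nonneg (sub_nonneg.2 (negMulLog_one_sub_le_negMulLog hx₀.le hx₁)) (by positivity)

lemma binEntropy_le_two_mul_log_two_mul_sqrt (hp₀ : 0 ≤ p) (hp₁ : p ≤ 1) :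
    binEntropy p ≤ 2 * log 2 * √(p * (1 - p)) := by
  wlog hp : p ≤ 2⁻¹ generalizing p
  · have hp' : 1 - p ≤ 2⁻¹ := by linarith
    simpa only [binEntropy_one_sub, sub_sub_cancel, mul_comm (1 - p)]
      using this (sub_nonneg.2 hp₁) (sub_le_self 1 hp₀) hp'
  rcases hp₀.eq_or_lt with rfl | hp₀
  · simp
  have hsqrt : 0 < √(p * (1 - p)) :=
    sqrt_pos.2 (mul_pos hp₀ (sub_pos.2 (hp.trans_lt two_inv_lt_one)))
  have hsqrt_half : √(2⁻¹ * (1 - 2⁻¹) : ℝ) = 2⁻¹ := by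
    rw [show (2⁻¹ * (1 - 2⁻¹) : ℝ) = 2⁻¹ ^ 2 by norm_num, sqrt_sq (by norm_num)]
  rw [← div_le_iff₀ hsqrt]
  calc binEntropy p / √(p * (1 - p))
      ≤ binEntropy 2⁻¹ / √(2⁻¹ * (1 - 2⁻¹)) :=
        monotoneOn_binEntropy_div_sqrt ⟨hp₀, hp⟩ (right_mem_Ioc.2 (hp₀.trans_le hp)) hp
    _ = 2 * log 2 := by rw [binEntropy_two_inv, hsqrt_half, div_inv_eq_mul, mul_comm]

lemma neg_mul_logb_sub_one_sub_mul_logb_one_sub (b p : ℝ) :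
    -p * logb b p - (1 - p) * logb b (1 - p) = binEntropy p / log b := by
  rw [binEntropy_eq_negMulLog_add_negMulLog_one_sub, negMulLog, negMulLog, logb, logb]
  ring

end Entropy

/-- Upper bound on the binary entropy: for every `q ∈ (0,1)`,
`H(q) = -q·log₂ q - (1-q)·log₂(1-q) ≤ 2·√(q·(1-q))`; in particular, for every `Φ ∈ (0,1)`,
`H(1-Φ) ≤ 2·√(Φ·(1-Φ))`. -/
theorem binary_entropy_le :
    (∀ q : ℝ, 0 < q → q < 1 →
        -q * Real.logb 2 q - (1 - q) * Real.logb 2 (1 - q) ≤ 2 * Real.sqrt (q * (1 - q))) ∧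
    (∀ Φ : ℝ, 0 < Φ → Φ < 1 →
        -(1 - Φ) * Real.logb 2 (1 - Φ) - (1 - (1 - Φ)) * Real.logb 2 (1 - (1 - Φ))
          ≤ 2 * Real.sqrt (Φ * (1 - Φ))) := by
  have entropy_le (q : ℝ) (hq₀ : 0 < q) (hq₁ : q < 1) :
      -q * logb 2 q - (1 - q) * logb 2 (1 - q) ≤ 2 * √(q * (1 - q)) := by
    rw [neg_mul_logb_sub_one_sub_mul_logb_one_sub, div_le_iff₀ (log_pos one_lt_two),
      mul_right_comm]
    exact binEntropy_le_two_mul_log_two_mul_sqrt hq₀.le hq₁.le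
  refine ⟨entropy_le, fun Φ hΦ₀ hΦ₁ ↦ ?_⟩
  have h := entropy_le (1 - Φ) (sub_pos.2 hΦ₁) (sub_lt_self 1 hΦ₀)
  simpa only [sub_sub_cancel, mul_comm Φ] using h
end

section
/- Let V be a finite set of c vertices and let f : V → Option V satisfy: for all u, f(u) ≠ some u (no self-loops), so that every vertex has out-degree at most 1 in the directed graph with edge set D = {(u,v) : f(u) = some v}. Let a = |{u ∈ V : f(u) is defined}| be the number of directed edges, and let H be the simple graph on V obtained as the symmetric closure of D (u and v adjacent iff f(u) = some v or f(v) = some u). Then the number of connected components of H is at most c − a/2; equivalently, 2·(number of connected components of H) + a ≤ 2·c. -/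
/-!
A component either contains two distinct vertices or is a single isolated vertex. So if isolated
vertices are counted twice and all others once, every component is counted at least twice. Vertices
with an outgoing edge are not isolated, hence the total count is at most `2 * c - a`.
-/

theorem two_mul_card_le_card_of_nontrivial_fibers {α β : Type*} {π : α → β}
    (hπ : ∀ b, (π ⁻¹' {b}).Nontrivial) : 2 * ENat.card β ≤ ENat.card α := by
  choose s hs t ht hst using hπ
  have hs_inj : s.Injective := Function.LeftInverse.injective hs
  have ht_inj : t.Injective := Function.LeftInverse.injective ht
  have disjoint_ranges (b b' : β) : s b ≠ t b' := by
    intro h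
    obtain rfl : b = b' := (hs b).symm.trans ((congrArg π h).trans (ht b'))
    exact hst b h
  calc
    2 * ENat.card β = ENat.card (β ⊕ β) := by rw [ENat.card_sum, two_mul]
    _ ≤ ENat.card α := ENat.card_le_card_of_injective (hs_inj.sumElim ht_inj disjoint_ranges)

section

variable {V : Type*} (G : SimpleGraph V)

theorem nontrivial_fiber_connectedComponentMk_sumElim (C : G.ConnectedComponent) :
    (Sum.elim G.connectedComponentMk (fun v : ↥G.supportᶜ ↦ G.connectedComponentMk v) ⁻¹'
      {C}).Nontrivial := by
  obtain ⟨v, rfl⟩ := C.exists_rep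
  by_cases hv : v ∈ G.support
  · obtain ⟨w, hvw⟩ := hv
    exact ⟨.inl v, rfl, .inl w,
      SimpleGraph.ConnectedComponent.connectedComponentMk_eq_of_adj hvw.symm,
      Sum.inl_injective.ne hvw.ne⟩
  · exact ⟨.inl v, rfl, .inr ⟨v, hv⟩, rfl, Sum.inl_ne_inr⟩

theorem symmetric_closure_components_general :
    2 * ENat.card G.ConnectedComponent + G.support.encard ≤ 2 * ENat.card V :=
  calc
    2 * ENat.card G.ConnectedComponent + G.support.encard
        ≤ ENat.card (V ⊕ ↥G.supportᶜ) + G.support.encard := by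
      gcongr
      exact two_mul_card_le_card_of_nontrivial_fibers
        (nontrivial_fiber_connectedComponentMk_sumElim G)
    _ = ENat.card V + (G.support.encard + G.supportᶜ.encard) := by
      rw [ENat.card_sum, ENat.card_coe_set_eq, add_assoc, add_comm G.supportᶜ.encard]
    _ = 2 * ENat.card V := by
      rw [Set.encard_add_encard_compl, Set.encard_univ, two_mul]

variable {G}

theorem setOf_isSome_subset_support {f : V → Option V}
    (hf : ∀ u v, f u = some v → G.Adj u v) : {u | (f u).isSome} ⊆ G.support := by
  intro u hu
  obtain ⟨v, hv⟩ := Option.isSome_iff_exists.mp hu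
  exact (hf u v hv).mem_support_left

end

/-- Combinatorial core of the cluster-merging lemma: let `V` be a finite set of `c`
vertices and `f : V → Option V` a map with no self-loops (`f u ≠ some u`), viewed as a
directed graph of out-degree at most `1` with `a` edges (where `a` is the number of `u`
with `f u` defined). If `H` is the simple graph obtained as the symmetric closure of this
directed graph, then `H` has at most `c - a/2` connected components, i.e.
`2 * #components + a ≤ 2 * c`. -/
theorem symmetric_closure_components {V : Type*} [Fintype V] [DecidableEq V]
    (c : ℕ) (hcard : Fintype.card V = c)
    (f : V → Option V) (hself : ∀ u, f u ≠ some u)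
    (a : ℕ) (ha : a = (Finset.univ.filter (fun u => (f u).isSome)).card)
    (H : SimpleGraph V)
    (hH : ∀ u v : V, H.Adj u v ↔ (f u = some v ∨ f v = some u)) :
    2 * Nat.card H.ConnectedComponent + a ≤ 2 * c := by
  have hle : (a : ℕ∞) ≤ H.support.encard := by
    rw [ha, ← Set.encard_coe_eq_coe_finsetCard, Finset.coe_filter_univ]
    exact Set.encard_le_encard (setOf_isSome_subset_support fun u v h ↦ (hH u v).2 (.inl h))
  have hbound := (add_le_add_right hle _).trans (symmetric_closure_components_general H)
  rw [ENat.card_eq_coe_natCard, ENat.card_eq_coe_fintype_card, hcard] at hbound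
  exact_mod_cast hbound
end
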